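/- Let n ≥ 1, τ > 0, and let P : [0, τ] → Sp(2n) be a continuous path of symplectic matrices. Suppose that for each j ∈ {0, 1} the function t ↦ dim(P(t)Lⱼ ∩ Lⱼ) is constant on [0, τ], where L₀ = {0} × ℝⁿ and L₁ = ℝⁿ × {0} are regarded as subspaces of ℝ^{2n} and P(t)Lⱼ is the image of Lⱼ under P(t). Then there exists ε₀ > 0 such that for every ε ∈ (0, ε₀) the real symmetric matrices M_ε(P(0)) and M_ε(P(τ)) have the same signature, where the signature of a real symmetric matrix is the number of its positive eigenvalues minus the number of its negative eigenvalues, counted with multiplicity. -/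

import Mathlib

open Matrix

/-- The standard symplectic matrix `J = [[0, -Iₙ], [Iₙ, 0]]` in `n × n` block form. -/
def Jmat (n : ℕ) : Matrix (Fin n ⊕ Fin n) (Fin n ⊕ Fin n) ℝ :=
  Matrix.fromBlocks 0 (-1) 1 0

/-- `S⁻(ε) = [[sin(2ε) Iₙ, −cos(2ε) Iₙ], [−cos(2ε) Iₙ, −sin(2ε) Iₙ]]`. -/
noncomputable def Sminus (n : ℕ) (ε : ℝ) : Matrix (Fin n ⊕ Fin n) (Fin n ⊕ Fin n) ℝ :=
  Matrix.fromBlocks (Real.sin (2 * ε) • 1) (-(Real.cos (2 * ε) • 1))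
    (-(Real.cos (2 * ε) • 1)) (-(Real.sin (2 * ε) • 1))

/-- `S⁺(ε) = [[sin(2ε) Iₙ, cos(2ε) Iₙ], [cos(2ε) Iₙ, −sin(2ε) Iₙ]]`. -/
noncomputable def Splus (n : ℕ) (ε : ℝ) : Matrix (Fin n ⊕ Fin n) (Fin n ⊕ Fin n) ℝ :=
  Matrix.fromBlocks (Real.sin (2 * ε) • 1) (Real.cos (2 * ε) • 1)
    (Real.cos (2 * ε) • 1) (-(Real.sin (2 * ε) • 1))

/-- `M_ε(P) = Pᵀ S⁻(ε) P + S⁺(ε)`. -/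
noncomputable def Meps (n : ℕ) (ε : ℝ)
    (P : Matrix (Fin n ⊕ Fin n) (Fin n ⊕ Fin n) ℝ) :
    Matrix (Fin n ⊕ Fin n) (Fin n ⊕ Fin n) ℝ :=
  Pᵀ * Sminus n ε * P + Splus n ε

/-- The Lagrangian subspace `L₀ = {0} × ℝⁿ` of `ℝ^{2n}`. -/
def Lsub (n : ℕ) : Fin 2 → Submodule ℝ ((Fin n ⊕ Fin n) → ℝ)
  | 0 => LinearMap.ker (LinearMap.funLeft ℝ ℝ (Sum.inl : Fin n → Fin n ⊕ Fin n))
  | 1 => LinearMap.ker (LinearMap.funLeft ℝ ℝ (Sum.inr : Fin n → Fin n ⊕ Fin n))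

/-- The signature of a real (symmetric) matrix: the dimension of the span of the
eigenspaces with positive eigenvalues minus the dimension of the span of
the eigenspaces with negative eigenvalues.  For a symmetric matrix this is the
number of positive eigenvalues minus the number of negative eigenvalues,
counted with multiplicity. -/
noncomputable def matSignature {m : Type*} [Fintype m] [DecidableEq m]
    (A : Matrix m m ℝ) : ℤ :=
  (Module.finrank ℝ
      ↥(⨆ lam : {l : ℝ // 0 < l}, LinearMap.ker (A - (lam : ℝ) • 1).mulVecLin) : ℤ) -
  (Module.finrank ℝ
      ↥(⨆ lam : {l : ℝ // l < 0}, LinearMap.ker (A - (lam : ℝ) • 1).mulVecLin) : ℤ)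

open Matrix Topology Filter

/-- Span of the eigenspaces with eigenvalue in `S`. -/
noncomputable def Esub {m : Type*} [Fintype m] [DecidableEq m]
    (A : Matrix m m ℝ) (S : Set ℝ) : Submodule ℝ (m → ℝ) :=
  ⨆ lam : {l : ℝ // l ∈ S}, LinearMap.ker (A - (lam : ℝ) • 1).mulVecLin

section spectral
variable {m : Type*} [Fintype m] [DecidableEq m]

lemma exists_diag (A : Matrix m m ℝ) (hA : Aᵀ = A) :
    ∃ (U : Matrix m m ℝ) (μ : m → ℝ), Uᵀ * U = 1 ∧ U * Uᵀ = 1 ∧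
      A = U * diagonal μ * Uᵀ := by
  have h : A.IsHermitian := by
    rw [Matrix.IsHermitian, Matrix.conjTranspose_eq_transpose_of_trivial, hA]
  have hu := h.eigenvectorUnitary.2
  rw [Matrix.mem_unitaryGroup_iff, Matrix.star_eq_conjTranspose,
    Matrix.conjTranspose_eq_transpose_of_trivial] at hu
  refine ⟨h.eigenvectorUnitary, h.eigenvalues, ?_, hu, ?_⟩
  · exact mul_eq_one_comm.mp hu
  · have := h.spectral_theorem
    rw [Unitary.conjStarAlgAut_apply, Matrix.star_eq_conjTranspose,
      Matrix.conjTranspose_eq_transpose_of_trivial] at this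
    exact this

lemma mem_Esub {A U : Matrix m m ℝ} {μ : m → ℝ} (h1 : Uᵀ * U = 1) (h2 : U * Uᵀ = 1)
    (hA : A = U * diagonal μ * Uᵀ) (S : Set ℝ) (x : m → ℝ) :
    x ∈ Esub A S ↔ ∀ i, μ i ∉ S → (Uᵀ *ᵥ x) i = 0 := by
  have key : ∀ y : m → ℝ, Uᵀ *ᵥ (A *ᵥ y) = fun i => μ i * (Uᵀ *ᵥ y) i := by
    intro y
    rw [hA, Matrix.mulVec_mulVec, ← Matrix.mul_assoc, ← Matrix.mul_assoc, h1, Matrix.one_mul,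
      ← Matrix.mulVec_mulVec]
    ext i
    rw [Matrix.mulVec_diagonal]
  have hU : ∀ y : m → ℝ, U *ᵥ (Uᵀ *ᵥ y) = y := by
    intro y; rw [Matrix.mulVec_mulVec, h2, Matrix.one_mulVec]
  constructor
  · intro hx i hi
    have hle : Esub A S ≤ LinearMap.ker ((LinearMap.proj i).comp (Uᵀ).mulVecLin) := by
      refine iSup_le ?_
      rintro ⟨l, hl⟩ y hy
      simp only [LinearMap.mem_ker, Matrix.mulVecLin_apply, Matrix.sub_mulVec, Matrix.smul_mulVec,
        Matrix.one_mulVec, sub_eq_zero] at hy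
      have := congrFun (key y) i
      rw [hy, Matrix.mulVec_smul] at this
      simp only [Pi.smul_apply, smul_eq_mul] at this
      have hne : l - μ i ≠ 0 := by
        intro h0
        exact hi (by rw [← sub_eq_zero.mp h0]; exact hl)
      have h3 : (l - μ i) * (Uᵀ *ᵥ y) i = 0 := by linarith
      exact (mul_eq_zero.mp h3).resolve_left hne
    exact hle hx
  · intro hx
    have hsum : x = ∑ i, U *ᵥ (Pi.single i ((Uᵀ *ᵥ x) i)) := by
      rw [← Matrix.mulVec_sum, Finset.univ_sum_single, hU]
    rw [hsum]
    refine Submodule.sum_mem _ fun i _ => ?_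
    by_cases hi : μ i ∈ S
    · refine Submodule.mem_iSup_of_mem ⟨μ i, hi⟩ ?_
      simp only [LinearMap.mem_ker, Matrix.mulVecLin_apply, Matrix.sub_mulVec, Matrix.smul_mulVec,
        Matrix.one_mulVec, sub_eq_zero]
      rw [hA, Matrix.mulVec_mulVec, Matrix.mul_assoc, h1, Matrix.mul_one, ← Matrix.mulVec_mulVec,
        Matrix.diagonal_mulVec_single, ← Matrix.mulVec_smul, ← Pi.single_smul, smul_eq_mul]
    · rw [hx i hi]; simp

lemma quad_eq {A U : Matrix m m ℝ} {μ : m → ℝ} 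
    (hA : A = U * diagonal μ * Uᵀ) (x : m → ℝ) :
    x ⬝ᵥ A *ᵥ x = ∑ i, μ i * (Uᵀ *ᵥ x) i ^ 2 := by
  rw [hA, ← Matrix.mulVec_mulVec, ← Matrix.mulVec_mulVec, Matrix.dotProduct_mulVec,
    ← Matrix.mulVec_transpose]
  simp only [dotProduct, Matrix.mulVec_diagonal]
  refine Finset.sum_congr rfl fun i _ => by ring

lemma Esub_compl (A : Matrix m m ℝ) (hA : Aᵀ = A) (S : Set ℝ) :
    IsCompl (Esub A S) (Esub A Sᶜ) := by
  obtain ⟨U, μ, h1, h2, h⟩ := exists_diag A hA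
  have hU : ∀ y : m → ℝ, U *ᵥ (Uᵀ *ᵥ y) = y := by
    intro y; rw [Matrix.mulVec_mulVec, h2, Matrix.one_mulVec]
  have hU' : ∀ y : m → ℝ, Uᵀ *ᵥ (U *ᵥ y) = y := by
    intro y; rw [Matrix.mulVec_mulVec, h1, Matrix.one_mulVec]
  constructor
  · rw [Submodule.disjoint_def]
    intro x hx hx'
    rw [mem_Esub h1 h2 h] at hx hx'
    rw [← hU x]
    have : Uᵀ *ᵥ x = 0 := by
      ext i
      by_cases hi : μ i ∈ S
      · exact hx' i (by simpa using hi)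
      · exact hx i hi
    rw [this, Matrix.mulVec_zero]
  · rw [codisjoint_iff, eq_top_iff]
    intro x _
    classical
    rw [Submodule.mem_sup]
    refine ⟨U *ᵥ (fun i => if μ i ∈ S then (Uᵀ *ᵥ x) i else 0), ?_,
      U *ᵥ (fun i => if μ i ∈ S then 0 else (Uᵀ *ᵥ x) i), ?_, ?_⟩
    · rw [mem_Esub h1 h2 h]
      intro i hi
      rw [hU']; simp [hi]
    · rw [mem_Esub h1 h2 h]
      intro i hi
      rw [hU']; 
      have : μ i ∈ S := by simpa using hi
      simp [this]
    · rw [← Matrix.mulVec_add]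
      conv_rhs => rw [← hU x]
      congr 1
      ext i
      by_cases hi : μ i ∈ S <;> simp [hi]

lemma finrank_le_Esub (A : Matrix m m ℝ) (hA : Aᵀ = A) (S : Set ℝ) (V : Submodule ℝ (m → ℝ))
    (hV : ∀ x ∈ V, x ∈ Esub A Sᶜ → x = 0) :
    Module.finrank ℝ V ≤ Module.finrank ℝ (Esub A S) := by
  have hc := Submodule.finrank_add_eq_of_isCompl (Esub_compl A hA S)
  have hd : Disjoint V (Esub A Sᶜ) := by rw [Submodule.disjoint_def]; exact hV
  have := Submodule.finrank_add_finrank_le_of_disjoint hd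
  omega

lemma Esub_union (A : Matrix m m ℝ) (S T : Set ℝ) :
    Esub A (S ∪ T) = Esub A S ⊔ Esub A T := by
  apply le_antisymm
  · refine iSup_le ?_
    rintro ⟨l, hl | hl⟩
    · exact le_trans (le_iSup (fun lam : {l : ℝ // l ∈ S} =>
        LinearMap.ker (A - (lam : ℝ) • 1).mulVecLin) ⟨l, hl⟩) le_sup_left
    · exact le_trans (le_iSup (fun lam : {l : ℝ // l ∈ T} =>
        LinearMap.ker (A - (lam : ℝ) • 1).mulVecLin) ⟨l, hl⟩) le_sup_right
  · refine sup_le (iSup_le ?_) (iSup_le ?_)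
    · rintro ⟨l, hl⟩
      exact le_iSup (fun lam : {l : ℝ // l ∈ S ∪ T} =>
        LinearMap.ker (A - (lam : ℝ) • 1).mulVecLin) ⟨l, Or.inl hl⟩
    · rintro ⟨l, hl⟩
      exact le_iSup (fun lam : {l : ℝ // l ∈ S ∪ T} =>
        LinearMap.ker (A - (lam : ℝ) • 1).mulVecLin) ⟨l, Or.inr hl⟩

lemma Esub_mono (A : Matrix m m ℝ) {S T : Set ℝ} (h : S ⊆ T) : Esub A S ≤ Esub A T := by
  rw [← Set.union_eq_self_of_subset_left h, Esub_union]; exact le_sup_left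

lemma Esub_zero (A : Matrix m m ℝ) : Esub A {0} = LinearMap.ker A.mulVecLin := by
  apply le_antisymm
  · refine iSup_le ?_
    rintro ⟨l, hl⟩
    obtain rfl : l = 0 := hl
    simp
  · have := le_iSup (fun lam : {l : ℝ // l ∈ ({0} : Set ℝ)} =>
        LinearMap.ker (A - (lam : ℝ) • 1).mulVecLin) ⟨0, rfl⟩
    simp only [zero_smul, sub_zero] at this
    exact this

noncomputable def pI (A : Matrix m m ℝ) : ℕ := Module.finrank ℝ (Esub A {l | 0 < l})
noncomputable def qI (A : Matrix m m ℝ) : ℕ := Module.finrank ℝ (Esub A {l | l < 0})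

lemma matSignature_eq (A : Matrix m m ℝ) : matSignature A = (pI A : ℤ) - qI A := rfl

lemma inertia_sum (A : Matrix m m ℝ) (hA : Aᵀ = A) :
    pI A + qI A + Module.finrank ℝ (LinearMap.ker A.mulVecLin) = Fintype.card m := by
  have hc := Submodule.finrank_add_eq_of_isCompl (Esub_compl A hA {l | 0 < l})
  have e : ({l : ℝ | 0 < l}ᶜ) = {l | l < 0} ∪ {0} := by
    ext l; simp [le_iff_lt_or_eq, or_comm]
  have hd : Disjoint (Esub A {l | l < 0}) (Esub A {0}) := by
    refine (Esub_compl A hA {l | l < 0}).disjoint.mono_right (Esub_mono A ?_)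
    rintro l rfl; simp
  have h2 := Submodule.finrank_sup_add_finrank_inf_eq (Esub A {l | l < 0}) (Esub A {0})
  rw [hd.eq_bot, finrank_bot, ← Esub_union, ← e, Esub_zero] at h2
  rw [Module.finrank_fintype_fun_eq_card] at hc
  unfold pI qI
  omega

lemma pos_on (A : Matrix m m ℝ) (hA : Aᵀ = A) (x : m → ℝ) (hx : x ∈ Esub A {l | 0 < l})
    (h0 : x ≠ 0) : 0 < x ⬝ᵥ A *ᵥ x := by
  obtain ⟨U, μ, h1, h2, h⟩ := exists_diag A hA
  rw [mem_Esub h1 h2 h] at hx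
  rw [quad_eq h]
  have hnn : ∀ i ∈ Finset.univ, 0 ≤ μ i * (Uᵀ *ᵥ x) i ^ 2 := by
    intro i _
    by_cases hi : 0 < μ i
    · positivity
    · rw [hx i hi]; simp
  refine lt_of_le_of_ne (Finset.sum_nonneg hnn) fun he => h0 ?_
  have hz := (Finset.sum_eq_zero_iff_of_nonneg hnn).mp he.symm
  have : Uᵀ *ᵥ x = 0 := by
    ext i
    by_cases hi : 0 < μ i
    · have := hz i (Finset.mem_univ i)
      simpa [hi.ne'] using this
    · exact hx i hi
  rw [← Matrix.one_mulVec x, ← h2, ← Matrix.mulVec_mulVec, this, Matrix.mulVec_zero]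

lemma nonpos_on (A : Matrix m m ℝ) (hA : Aᵀ = A) (x : m → ℝ)
    (hx : x ∈ Esub A {l | 0 < l}ᶜ) : x ⬝ᵥ A *ᵥ x ≤ 0 := by
  obtain ⟨U, μ, h1, h2, h⟩ := exists_diag A hA
  rw [mem_Esub h1 h2 h] at hx
  rw [quad_eq h]
  refine Finset.sum_nonpos fun i _ => ?_
  by_cases hi : 0 < μ i
  · rw [hx i (by simpa using hi)]; simp
  · have := sq_nonneg ((Uᵀ *ᵥ x) i)
    nlinarith

lemma le_pI (A : Matrix m m ℝ) (hA : Aᵀ = A) (V : Submodule ℝ (m → ℝ))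
    (hV : ∀ x ∈ V, x ≠ 0 → 0 < x ⬝ᵥ A *ᵥ x) : Module.finrank ℝ V ≤ pI A := by
  refine finrank_le_Esub A hA _ V fun x hx hx' => ?_
  by_contra h
  exact absurd (hV x hx h) (not_lt.mpr (nonpos_on A hA x hx'))

lemma Esub_neg (A : Matrix m m ℝ) : Esub (-A) {l | 0 < l} = Esub A {l | l < 0} := by
  have aux : ∀ (B : Matrix m m ℝ) (l : ℝ), LinearMap.ker (-B - l • 1).mulVecLin =
      LinearMap.ker (B - (-l) • 1).mulVecLin := by
    intro B l
    ext x
    have : (-B - l • 1 : Matrix m m ℝ) = -(B - (-l) • 1) := by rw [neg_smul]; abel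
    rw [this]
    simp only [LinearMap.mem_ker, Matrix.mulVecLin_apply, Matrix.neg_mulVec, neg_eq_zero]
  apply le_antisymm
  · refine iSup_le ?_
    rintro ⟨l, hl⟩
    rw [aux]
    exact le_iSup (fun lam : {l : ℝ // l ∈ {l : ℝ | l < 0}} =>
        LinearMap.ker (A - (lam : ℝ) • 1).mulVecLin) ⟨-l, by simpa using hl⟩
  · refine iSup_le ?_
    rintro ⟨l, hl⟩
    have h2 := aux A (-l)
    rw [neg_neg] at h2
    rw [← h2]
    exact le_iSup (fun lam : {l : ℝ // l ∈ {l : ℝ | 0 < l}} =>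
        LinearMap.ker (-A - (lam : ℝ) • 1).mulVecLin) ⟨-l, by simpa using hl⟩

lemma qI_eq (A : Matrix m m ℝ) : qI A = pI (-A) := by
  unfold qI pI; rw [Esub_neg]

/-- compactness: reduction to the unit sphere. -/
lemma ev_posdef {X : Type*} (l : Filter X)
    (V : Submodule ℝ (m → ℝ)) (F : X → Matrix m m ℝ)
    (h : ∀ x ∈ V, x ≠ 0 → ∀ᶠ z in l ×ˢ 𝓝 x, z.2 ∈ V → 0 < z.2 ⬝ᵥ F z.1 *ᵥ z.2) :
    ∀ᶠ t in l, ∀ x ∈ V, x ≠ 0 → 0 < x ⬝ᵥ F t *ᵥ x := by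
  have hK : IsCompact (Metric.sphere (0 : m → ℝ) 1 ∩ V) :=
    (isCompact_sphere 0 1).inter_right V.closed_of_finiteDimensional
  have : ∀ᶠ t in l, ∀ x ∈ Metric.sphere (0 : m → ℝ) 1 ∩ V, x ∈ V → 0 < x ⬝ᵥ F t *ᵥ x := by
    refine hK.induction_on (p := fun s => ∀ᶠ t in l, ∀ x ∈ s, x ∈ V → 0 < x ⬝ᵥ F t *ᵥ x)
      ?_ ?_ ?_ ?_
    · simp
    · intro s t hst ht
      filter_upwards [ht] with z hz x hx using hz x (hst hx)
    · intro s t hs ht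
      filter_upwards [hs, ht] with z hz hz' x hx
      rcases hx with hx | hx
      · exact hz x hx
      · exact hz' x hx
    · rintro x ⟨hx, hxV⟩
      have hne : x ≠ 0 := by
        rintro rfl; simp at hx
      obtain ⟨pa, ha, pb, hb, hab⟩ := eventually_prod_iff.mp (h x hxV hne)
      refine ⟨{y | pb y}, mem_nhdsWithin_of_mem_nhds hb, ?_⟩
      filter_upwards [ha] with t ht y hy hyV
      exact hab ht hy hyV
  filter_upwards [this] with t ht x hx h0
  have hn : 0 < ‖x‖ := norm_pos_iff.mpr h0
  have h1 := ht (‖x‖⁻¹ • x) ⟨by simp [norm_smul, hn.ne'], V.smul_mem _ hx⟩ (V.smul_mem _ hx)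
  rw [Matrix.mulVec_smul, dotProduct_smul, smul_dotProduct, smul_eq_mul, smul_eq_mul] at h1
  have h2 : 0 < ‖x‖⁻¹ := inv_pos.mpr hn
  exact (mul_pos_iff_of_pos_left h2).mp ((mul_pos_iff_of_pos_left h2).mp h1)

lemma quad_cont : Continuous (fun z : Matrix m m ℝ × (m → ℝ) => z.2 ⬝ᵥ z.1 *ᵥ z.2) := by
  fun_prop

lemma lsc_pI {X : Type*} (x₀ : X) (l : Filter X)
    (F : X → Matrix m m ℝ) (hF : Tendsto F l (𝓝 (F x₀))) (h0 : (F x₀)ᵀ = F x₀)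
    (hs : ∀ᶠ t in l, (F t)ᵀ = F t) :
    ∀ᶠ t in l, pI (F x₀) ≤ pI (F t) := by
  have := ev_posdef l (Esub (F x₀) {l | 0 < l}) F (by
    intro x hx hne
    have hp := pos_on _ h0 x hx hne
    have ht : Tendsto (fun z : X × (m → ℝ) => z.2 ⬝ᵥ F z.1 *ᵥ z.2) (l ×ˢ 𝓝 x)
        (𝓝 (x ⬝ᵥ F x₀ *ᵥ x)) := by
      have h1 : Tendsto (fun z : X × (m → ℝ) => (F z.1, z.2)) (l ×ˢ 𝓝 x) (𝓝 (F x₀, x)) :=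
        (hF.comp tendsto_fst).prodMk_nhds tendsto_snd
      exact (quad_cont.tendsto (F x₀, x)).comp h1
    filter_upwards [ht.eventually (lt_mem_nhds hp)] with z hz _ using hz)
  filter_upwards [this, hs] with t ht hst
  exact le_pI _ hst _ ht

/-- `c(ε) M₀ + s(ε) M₁` -/
lemma perturb (M₀ M₁ : Matrix m m ℝ) (h₀ : M₀ᵀ = M₀) (h₁ : M₁ᵀ = M₁) (W : Submodule ℝ (m → ℝ))
    (hW : ∀ x ∈ W, M₀ *ᵥ x = 0) (hW1 : ∀ x ∈ W, x ≠ 0 → 0 < x ⬝ᵥ M₁ *ᵥ x) :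
    ∀ᶠ ε in 𝓝[>] (0 : ℝ), pI M₀ + Module.finrank ℝ W ≤
      pI (Real.cos (2 * ε) • M₀ + Real.sin (2 * ε) • M₁) := by
  set V := Esub M₀ {l | 0 < l} with hV
  have hquad : ∀ v : m → ℝ, ∀ w ∈ W, (v + w) ⬝ᵥ M₀ *ᵥ (v + w) = v ⬝ᵥ M₀ *ᵥ v := by
    intro v w hw
    rw [Matrix.mulVec_add, hW w hw, add_zero, add_dotProduct, Matrix.dotProduct_mulVec w,
      ← Matrix.mulVec_transpose, h₀, hW w hw]
    simp
  have hd : Disjoint V W := by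
    rw [Submodule.disjoint_def]
    intro x hx hx'
    by_contra hne
    have := pos_on M₀ h₀ x hx hne
    rw [hW x hx'] at this
    simp at this
  have hdim : Module.finrank ℝ ↥(V ⊔ W) = pI M₀ + Module.finrank ℝ W := by
    have := Submodule.finrank_sup_add_finrank_inf_eq V W
    rw [hd.eq_bot, finrank_bot] at this
    simpa [pI] using this
  have hnn : ∀ x ∈ V ⊔ W, 0 ≤ x ⬝ᵥ M₀ *ᵥ x := by
    intro x hx
    obtain ⟨v, hv, w, hw, rfl⟩ := Submodule.mem_sup.mp hx
    rw [hquad v w hw]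
    by_cases hv0 : v = 0
    · simp [hv0]
    · exact (pos_on M₀ h₀ v hv hv0).le
  have hz : ∀ x ∈ V ⊔ W, x ≠ 0 → x ⬝ᵥ M₀ *ᵥ x = 0 → 0 < x ⬝ᵥ M₁ *ᵥ x := by
    intro x hx hne he
    obtain ⟨v, hv, w, hw, rfl⟩ := Submodule.mem_sup.mp hx
    rw [hquad v w hw] at he
    by_cases hv0 : v = 0
    · subst hv0
      rw [zero_add] at hne ⊢
      exact hW1 w hw hne
    · exact absurd he (pos_on M₀ h₀ v hv hv0).ne'
  have hexp : ∀ (a b : ℝ) (x : m → ℝ), x ⬝ᵥ (a • M₀ + b • M₁) *ᵥ x =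
      a * (x ⬝ᵥ M₀ *ᵥ x) + b * (x ⬝ᵥ M₁ *ᵥ x) := by
    intro a b x
    rw [Matrix.add_mulVec, Matrix.smul_mulVec, Matrix.smul_mulVec, dotProduct_add,
      dotProduct_smul, dotProduct_smul, smul_eq_mul, smul_eq_mul]
  have hcos : ∀ᶠ ε in 𝓝[>] (0 : ℝ), 0 < Real.cos (2 * ε) := by
    have hc : Continuous fun ε : ℝ => Real.cos (2 * ε) := by fun_prop
    exact nhdsWithin_le_nhds (hc.tendsto 0 |>.eventually (lt_mem_nhds (by simp)))
  have hsin : ∀ᶠ ε in 𝓝[>] (0 : ℝ), 0 < Real.sin (2 * ε) := by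
    have h3 : ∀ᶠ ε in 𝓝[>] (0 : ℝ), ε < 1 := nhdsWithin_le_nhds (gt_mem_nhds one_pos)
    filter_upwards [h3, self_mem_nhdsWithin] with ε h1 h0
    have h0' : 0 < ε := h0
    exact Real.sin_pos_of_pos_of_lt_pi (by linarith) (by linarith [Real.pi_gt_three])
  have := ev_posdef (𝓝[>] (0 : ℝ)) (V ⊔ W)
    (fun ε => Real.cos (2 * ε) • M₀ + Real.sin (2 * ε) • M₁) (by
    intro x hx hne
    rcases (hnn x hx).lt_or_eq with hp | he
    · have hc : Continuous fun z : ℝ × (m → ℝ) =>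
          z.2 ⬝ᵥ (Real.cos (2 * z.1) • M₀ + Real.sin (2 * z.1) • M₁) *ᵥ z.2 := by
        fun_prop
      have ht := hc.tendsto (0, x) |>.eventually (lt_mem_nhds (a := 0) (by simpa using hp))
      rw [nhds_prod_eq] at ht
      have ht' := ht.filter_mono (prod_mono (nhdsWithin_le_nhds (s := Set.Ioi 0)) le_rfl)
      filter_upwards [ht'] with z hz' _ using hz'
    · have hp := hz x hx hne he.symm
      have hc : Continuous fun y : (m → ℝ) => y ⬝ᵥ M₁ *ᵥ y := by fun_prop
      have hy := (hc.tendsto x).eventually (lt_mem_nhds hp)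
      filter_upwards [(hcos.and hsin).prod_mk hy] with z hz' hzV
      rw [hexp]
      have := hnn z.2 hzV
      have h4 := mul_pos hz'.1.2 hz'.2
      have h5 := mul_nonneg hz'.1.1.le this
      linarith)
  filter_upwards [this] with ε hε
  rw [← hdim]
  refine le_pI _ ?_ _ hε
  rw [Matrix.transpose_add, Matrix.transpose_smul, Matrix.transpose_smul, h₀, h₁]

end spectral

section symp
variable {n : ℕ}

def Nmat (n : ℕ) : Matrix (Fin n ⊕ Fin n) (Fin n ⊕ Fin n) ℝ := Matrix.fromBlocks 1 0 0 (-1)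
def Kmat (n : ℕ) : Matrix (Fin n ⊕ Fin n) (Fin n ⊕ Fin n) ℝ := Matrix.fromBlocks 0 1 1 0

def M0 (P : Matrix (Fin n ⊕ Fin n) (Fin n ⊕ Fin n) ℝ) := Kmat n - Pᵀ * Kmat n * P
def M1 (P : Matrix (Fin n ⊕ Fin n) (Fin n ⊕ Fin n) ℝ) := Nmat n + Pᵀ * Nmat n * P

lemma Kmat_symm : (Kmat n)ᵀ = Kmat n := by simp [Kmat, Matrix.fromBlocks_transpose]
lemma Nmat_symm : (Nmat n)ᵀ = Nmat n := by simp [Nmat, Matrix.fromBlocks_transpose]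

lemma M0_symm (P : Matrix (Fin n ⊕ Fin n) (Fin n ⊕ Fin n) ℝ) : (M0 P)ᵀ = M0 P := by
  simp [M0, Matrix.transpose_mul, Kmat_symm, Matrix.mul_assoc]

lemma M1_symm (P : Matrix (Fin n ⊕ Fin n) (Fin n ⊕ Fin n) ℝ) : (M1 P)ᵀ = M1 P := by
  simp [M1, Matrix.transpose_mul, Nmat_symm, Matrix.mul_assoc]

lemma Meps_eq (ε : ℝ) (P : Matrix (Fin n ⊕ Fin n) (Fin n ⊕ Fin n) ℝ) :
    Meps n ε P = Real.cos (2 * ε) • M0 P + Real.sin (2 * ε) • M1 P := by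
  have h1 : Sminus n ε = Real.sin (2 * ε) • Nmat n - Real.cos (2 * ε) • Kmat n := by
    rw [sub_eq_add_neg, ← neg_smul]
    simp [Sminus, Nmat, Kmat, Matrix.fromBlocks_smul, Matrix.fromBlocks_add,
      Matrix.fromBlocks_neg]
  have h2 : Splus n ε = Real.sin (2 * ε) • Nmat n + Real.cos (2 * ε) • Kmat n := by
    simp [Splus, Nmat, Kmat, Matrix.fromBlocks_smul, Matrix.fromBlocks_add]
  rw [Meps, h1, h2, M0, M1, Matrix.mul_sub, Matrix.sub_mul, Matrix.mul_smul, Matrix.mul_smul,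
    Matrix.smul_mul, Matrix.smul_mul, smul_sub, smul_add]
  abel

lemma JN : Jmat n * Nmat n = Kmat n := by
  simp [Jmat, Nmat, Kmat, Matrix.fromBlocks_multiply]

lemma JJ : Jmat n * Jmat n = -1 := by
  rw [← Matrix.fromBlocks_one, Matrix.fromBlocks_neg]
  simp [Jmat, Matrix.fromBlocks_multiply]

lemma symp_inv {P : Matrix (Fin n ⊕ Fin n) (Fin n ⊕ Fin n) ℝ} (h : Pᵀ * Jmat n * P = Jmat n) :
    (-(Jmat n * Pᵀ * Jmat n)) * P = 1 := by
  rw [Matrix.neg_mul, Matrix.mul_assoc, Matrix.mul_assoc, ← Matrix.mul_assoc Pᵀ, h, JJ, neg_neg]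

lemma symp_inj {P : Matrix (Fin n ⊕ Fin n) (Fin n ⊕ Fin n) ℝ} (h : Pᵀ * Jmat n * P = Jmat n) :
    Function.Injective P.mulVecLin := by
  intro x y hxy
  simp only [Matrix.mulVecLin_apply] at hxy
  rw [← Matrix.one_mulVec x, ← Matrix.one_mulVec y, ← symp_inv h, ← Matrix.mulVec_mulVec, hxy,
    Matrix.mulVec_mulVec]

lemma M0_ker {P : Matrix (Fin n ⊕ Fin n) (Fin n ⊕ Fin n) ℝ} (h : Pᵀ * Jmat n * P = Jmat n)
    (x : Fin n ⊕ Fin n → ℝ) :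
    M0 P *ᵥ x = 0 ↔ P *ᵥ (Nmat n *ᵥ x) = Nmat n *ᵥ (P *ᵥ x) := by
  have e : M0 P = Pᵀ * Jmat n * (P * Nmat n - Nmat n * P) := by
    rw [M0, Matrix.mul_sub, ← Matrix.mul_assoc, h, JN]
    simp only [← JN, Matrix.mul_assoc]
  have hl : (P * (-Jmat n)) * (Pᵀ * Jmat n) = 1 := by
    rw [← mul_eq_one_comm.mp (symp_inv h)]
    simp only [Matrix.mul_neg, Matrix.neg_mul, Matrix.mul_assoc]
  rw [e, ← Matrix.mulVec_mulVec]
  rw [Matrix.sub_mulVec, ← Matrix.mulVec_mulVec x P, ← Matrix.mulVec_mulVec x (Nmat n)]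
  constructor
  · intro h0
    have := congrArg (fun y => (P * (-Jmat n)) *ᵥ y) h0
    rw [Matrix.mulVec_mulVec, hl, Matrix.one_mulVec, Matrix.mulVec_zero] at this
    exact sub_eq_zero.mp this
  · intro h0
    rw [h0, sub_self, Matrix.mulVec_zero]

lemma N_inl (x : Fin n ⊕ Fin n → ℝ) (i : Fin n) : (Nmat n *ᵥ x) (Sum.inl i) = x (Sum.inl i) := by
  simp [Nmat, Matrix.fromBlocks_mulVec]
lemma N_inr (x : Fin n ⊕ Fin n → ℝ) (i : Fin n) :
    (Nmat n *ᵥ x) (Sum.inr i) = - x (Sum.inr i) := by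
  simp [Nmat, Matrix.fromBlocks_mulVec, Matrix.neg_mulVec]

lemma mem_L0 (x : Fin n ⊕ Fin n → ℝ) : x ∈ Lsub n 0 ↔ Nmat n *ᵥ x = -x := by
  simp only [Lsub, LinearMap.mem_ker]
  constructor
  · intro h
    ext (i | i)
    · have : x (Sum.inl i) = 0 := congrFun h i
      rw [N_inl]; simp [this]
    · rw [N_inr]; rfl
  · intro h
    ext i
    have := congrFun h (Sum.inl i)
    rw [N_inl, Pi.neg_apply] at this
    change x (Sum.inl i) = 0
    linarith

lemma mem_L1 (x : Fin n ⊕ Fin n → ℝ) : x ∈ Lsub n 1 ↔ Nmat n *ᵥ x = x := by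
  simp only [Lsub, LinearMap.mem_ker]
  constructor
  · intro h
    ext (i | i)
    · rw [N_inl]
    · have : x (Sum.inr i) = 0 := congrFun h i
      rw [N_inr]; simp [this]
  · intro h
    ext i
    have := congrFun h (Sum.inr i)
    rw [N_inr] at this
    change x (Sum.inr i) = 0
    linarith

lemma NN (x : Fin n ⊕ Fin n → ℝ) : Nmat n *ᵥ (Nmat n *ᵥ x) = x := by
  ext (i | i) <;> simp [N_inl, N_inr]

def Wsub (P : Matrix (Fin n ⊕ Fin n) (Fin n ⊕ Fin n) ℝ) (j : Fin 2) :
    Submodule ℝ (Fin n ⊕ Fin n → ℝ) := Lsub n j ⊓ (Lsub n j).comap P.mulVecLin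

lemma W_finrank {P : Matrix (Fin n ⊕ Fin n) (Fin n ⊕ Fin n) ℝ} (h : Pᵀ * Jmat n * P = Jmat n)
    (j : Fin 2) : Module.finrank ℝ (Wsub P j) =
      Module.finrank ℝ ↥((Lsub n j).map P.mulVecLin ⊓ Lsub n j) := by
  rw [Submodule.map_inf_eq_map_inf_comap]
  exact (Submodule.equivMapOfInjective _ (symp_inj h) _).finrank_eq

lemma ker_finrank {P : Matrix (Fin n ⊕ Fin n) (Fin n ⊕ Fin n) ℝ}
    (h : Pᵀ * Jmat n * P = Jmat n) :
    Module.finrank ℝ (LinearMap.ker (M0 P).mulVecLin) =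
      Module.finrank ℝ (Wsub P 0) + Module.finrank ℝ (Wsub P 1) := by
  have hsup : LinearMap.ker (M0 P).mulVecLin = Wsub P 0 ⊔ Wsub P 1 := by
    apply le_antisymm
    · intro x hx
      rw [LinearMap.mem_ker, Matrix.mulVecLin_apply, M0_ker h] at hx
      rw [Submodule.mem_sup]
      refine ⟨(1 / 2 : ℝ) • (x - Nmat n *ᵥ x), ⟨?_, ?_⟩,
        (1 / 2 : ℝ) • (x + Nmat n *ᵥ x), ⟨?_, ?_⟩, ?_⟩
      · rw [SetLike.mem_coe, mem_L0, Matrix.mulVec_smul, Matrix.mulVec_sub, NN, ← smul_neg, neg_sub]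
      · rw [SetLike.mem_coe, Submodule.mem_comap, mem_L0, Matrix.mulVecLin_apply,
          Matrix.mulVec_smul, Matrix.mulVec_smul, Matrix.mulVec_sub, hx, Matrix.mulVec_sub, NN,
          ← smul_neg, neg_sub]
      · rw [SetLike.mem_coe, mem_L1, Matrix.mulVec_smul, Matrix.mulVec_add, NN, add_comm]
      · rw [SetLike.mem_coe, Submodule.mem_comap, mem_L1, Matrix.mulVecLin_apply,
          Matrix.mulVec_smul, Matrix.mulVec_smul, Matrix.mulVec_add, hx, Matrix.mulVec_add, NN,
          add_comm]
      · module
    · refine sup_le ?_ ?_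
      · rintro x ⟨hx, hx'⟩
        rw [SetLike.mem_coe, mem_L0] at hx
        rw [SetLike.mem_coe, Submodule.mem_comap, mem_L0, Matrix.mulVecLin_apply] at hx'
        rw [LinearMap.mem_ker, Matrix.mulVecLin_apply, M0_ker h, hx, hx', Matrix.mulVec_neg]
      · rintro x ⟨hx, hx'⟩
        rw [SetLike.mem_coe, mem_L1] at hx
        rw [SetLike.mem_coe, Submodule.mem_comap, mem_L1, Matrix.mulVecLin_apply] at hx'
        rw [LinearMap.mem_ker, Matrix.mulVecLin_apply, M0_ker h, hx, hx']
  have hd : Disjoint (Wsub P 0) (Wsub P 1) := by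
    rw [Submodule.disjoint_def]
    rintro x ⟨hx, -⟩ ⟨hx', -⟩
    rw [SetLike.mem_coe, mem_L0] at hx
    rw [SetLike.mem_coe, mem_L1, hx] at hx'
    ext i
    have := congrFun hx' i
    simp only [Pi.neg_apply, Pi.zero_apply] at this ⊢
    linarith
  have := Submodule.finrank_sup_add_finrank_inf_eq (Wsub P 0) (Wsub P 1)
  rw [hd.eq_bot, finrank_bot, ← hsup] at this
  simpa using this

lemma M1_quad (P : Matrix (Fin n ⊕ Fin n) (Fin n ⊕ Fin n) ℝ) (x : Fin n ⊕ Fin n → ℝ) :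
    x ⬝ᵥ M1 P *ᵥ x = x ⬝ᵥ Nmat n *ᵥ x + (P *ᵥ x) ⬝ᵥ Nmat n *ᵥ (P *ᵥ x) := by
  rw [M1, Matrix.add_mulVec, dotProduct_add, ← Matrix.mulVec_mulVec, ← Matrix.mulVec_mulVec,
    Matrix.dotProduct_mulVec x Pᵀ, Matrix.vecMul_transpose]

lemma dot_pos {x : Fin n ⊕ Fin n → ℝ} (h : x ≠ 0) : 0 < x ⬝ᵥ x := by
  have h1 : 0 ≤ x ⬝ᵥ x := Finset.sum_nonneg fun i _ => mul_self_nonneg _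
  exact lt_of_le_of_ne h1 fun he => h (dotProduct_self_eq_zero.mp he.symm)

lemma dot_nonneg (x : Fin n ⊕ Fin n → ℝ) : 0 ≤ x ⬝ᵥ x :=
  Finset.sum_nonneg fun i _ => mul_self_nonneg _

lemma M0_W {P : Matrix (Fin n ⊕ Fin n) (Fin n ⊕ Fin n) ℝ}
    (h : Pᵀ * Jmat n * P = Jmat n) (j : Fin 2) (x : Fin n ⊕ Fin n → ℝ) (hx : x ∈ Wsub P j) :
    M0 P *ᵥ x = 0 := by
  obtain ⟨hx, hx'⟩ := hx
  rw [SetLike.mem_coe] at hx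
  rw [SetLike.mem_coe, Submodule.mem_comap, Matrix.mulVecLin_apply] at hx'
  rw [M0_ker h]
  fin_cases j
  · rw [(mem_L0 _).mp hx, (mem_L0 _).mp hx', Matrix.mulVec_neg]
  · rw [(mem_L1 _).mp hx, (mem_L1 _).mp hx']

lemma local_sig {P : Matrix (Fin n ⊕ Fin n) (Fin n ⊕ Fin n) ℝ}
    (h : Pᵀ * Jmat n * P = Jmat n) :
    ∀ᶠ ε in 𝓝[>] (0 : ℝ), matSignature (Meps n ε P) =
      (pI (M0 P) + Module.finrank ℝ (Wsub P 1) : ℤ) -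
        (qI (M0 P) + Module.finrank ℝ (Wsub P 0)) := by
  have hp := perturb (M0 P) (M1 P) (M0_symm P) (M1_symm P) (Wsub P 1) (M0_W h 1) (by
    rintro x ⟨hx, hx'⟩ hne
    rw [SetLike.mem_coe] at hx
    rw [SetLike.mem_coe, Submodule.mem_comap, Matrix.mulVecLin_apply] at hx'
    rw [M1_quad, (mem_L1 _).mp hx, (mem_L1 _).mp hx']
    linarith [dot_pos hne, dot_nonneg (P *ᵥ x)])
  have hq := perturb (-M0 P) (-M1 P) (by rw [Matrix.transpose_neg, M0_symm])
    (by rw [Matrix.transpose_neg, M1_symm]) (Wsub P 0)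
    (fun x hx => by rw [Matrix.neg_mulVec, M0_W h 0 x hx, neg_zero]) (by
    rintro x ⟨hx, hx'⟩ hne
    rw [SetLike.mem_coe] at hx
    rw [SetLike.mem_coe, Submodule.mem_comap, Matrix.mulVecLin_apply] at hx'
    rw [Matrix.neg_mulVec, dotProduct_neg, M1_quad, (mem_L0 _).mp hx, (mem_L0 _).mp hx',
      dotProduct_neg, dotProduct_neg]
    linarith [dot_pos hne, dot_nonneg (P *ᵥ x)])
  filter_upwards [hp, hq] with ε hpε hqε
  rw [← Meps_eq] at hpε
  rw [smul_neg, smul_neg, ← neg_add, ← Meps_eq, ← qI_eq, ← qI_eq] at hqε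
  have hs : (Meps n ε P)ᵀ = Meps n ε P := by
    rw [Meps_eq, Matrix.transpose_add, Matrix.transpose_smul, Matrix.transpose_smul, M0_symm,
      M1_symm]
  have i1 := inertia_sum _ hs
  have i2 := inertia_sum _ (M0_symm P)
  rw [ker_finrank h] at i2
  rw [matSignature_eq]
  omega

end symp

theorem stmt_15 (n : ℕ) (hn : 1 ≤ n) (τ : ℝ) (hτ : 0 < τ)
    (P : ℝ → Matrix (Fin n ⊕ Fin n) (Fin n ⊕ Fin n) ℝ)
    (hcont : ContinuousOn P (Set.Icc 0 τ))
    (hsp : ∀ t ∈ Set.Icc (0 : ℝ) τ, (P t)ᵀ * Jmat n * P t = Jmat n)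
    (hconst : ∀ j : Fin 2, ∀ s ∈ Set.Icc (0 : ℝ) τ, ∀ t ∈ Set.Icc (0 : ℝ) τ,
      Module.finrank ℝ ↥((Lsub n j).map (P s).mulVecLin ⊓ Lsub n j) =
        Module.finrank ℝ ↥((Lsub n j).map (P t).mulVecLin ⊓ Lsub n j)) :
    ∃ ε₀ > (0 : ℝ), ∀ ε : ℝ, 0 < ε → ε < ε₀ →
      matSignature (Meps n ε (P 0)) = matSignature (Meps n ε (P τ)) := by
  have hlc : ContinuousOn (fun t => pI (M0 (P t))) (Set.Icc 0 τ) := by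
    intro t₀ ht₀
    have hM : ContinuousOn (fun t => M0 (P t)) (Set.Icc 0 τ) := by
      have hc : Continuous (fun A : Matrix (Fin n ⊕ Fin n) (Fin n ⊕ Fin n) ℝ => M0 A) := by
        unfold M0; fun_prop
      exact hc.comp_continuousOn hcont
    have h1 := lsc_pI t₀ (𝓝[Set.Icc 0 τ] t₀) (fun t => M0 (P t)) (hM t₀ ht₀) (M0_symm _)
      (Eventually.of_forall fun t => M0_symm _)
    have h2 := lsc_pI t₀ (𝓝[Set.Icc 0 τ] t₀) (fun t => -M0 (P t)) (hM t₀ ht₀).neg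
      (by rw [Matrix.transpose_neg, M0_symm])
      (Eventually.of_forall fun t => by rw [Matrix.transpose_neg, M0_symm])
    refine tendsto_nhds_of_eventually_eq ?_
    filter_upwards [h1, h2, self_mem_nhdsWithin] with t ha hb ht
    rw [← qI_eq, ← qI_eq] at hb
    have i1 := inertia_sum _ (M0_symm (P t₀))
    have i2 := inertia_sum _ (M0_symm (P t))
    rw [ker_finrank (hsp _ ht₀), W_finrank (hsp _ ht₀), W_finrank (hsp _ ht₀)] at i1
    rw [ker_finrank (hsp _ ht), W_finrank (hsp _ ht), W_finrank (hsp _ ht)] at i2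
    have d0 := hconst 0 t₀ ht₀ t ht
    have d1 := hconst 1 t₀ ht₀ t ht
    omega
  have m0 : (0 : ℝ) ∈ Set.Icc 0 τ := ⟨le_rfl, hτ.le⟩
  have mτ : τ ∈ Set.Icc 0 τ := ⟨hτ.le, le_rfl⟩
  have hp : pI (M0 (P 0)) = pI (M0 (P τ)) := isPreconnected_Icc.constant hlc m0 mτ
  have hev := (local_sig (hsp 0 m0)).and (local_sig (hsp τ mτ))
  obtain ⟨ε₀, hε₀, hsub⟩ := mem_nhdsGT_iff_exists_Ioo_subset.mp hev
  refine ⟨ε₀, hε₀, fun ε h1 h2 => ?_⟩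
  obtain ⟨e1, e2⟩ := hsub ⟨h1, h2⟩
  rw [e1, e2]
  have i1 := inertia_sum _ (M0_symm (P 0))
  have i2 := inertia_sum _ (M0_symm (P τ))
  rw [ker_finrank (hsp _ m0)] at i1
  rw [ker_finrank (hsp _ mτ)] at i2
  have d0 := hconst 0 0 m0 τ mτ
  have d1 := hconst 1 0 m0 τ mτ
  rw [← W_finrank (hsp _ m0), ← W_finrank (hsp _ mτ)] at d0 d1
  omega
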